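/- Identify real binary quartics f = a₀x⁴ + 4a₁x³y + 6a₂x²y² + 4a₃xy³ + a₄y⁴ with their coefficient vectors (a₀,a₁,a₂,a₃,a₄) ∈ ℝ⁵, and for each r let S_{4,r} ⊆ ℝ⁵ be the set of nonzero quartics of real rank exactly r. Then S_{4,r} has nonempty interior in ℝ⁵ if and only if r = 3 or r = 4. -/

import Mathlib

open MvPolynomial

noncomputable section

/-- The real linear binary form `a·x + b·y`. -/
def lin (a b : ℝ) : MvPolynomial (Fin 2) ℝ := C a * X 0 + C b * X 1

/-- `f` is a sum of `r` terms `cⱼ · ℓⱼ^d` with `ℓⱼ` nonzero real linear forms. -/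
def HasDecomp (f : MvPolynomial (Fin 2) ℝ) (d r : ℕ) : Prop :=
  ∃ c a b : Fin r → ℝ, (∀ j, (a j, b j) ≠ (0, 0)) ∧
    f = ∑ j, C (c j) * lin (a j) (b j) ^ d

/-- The real (symmetric) rank of a binary form of degree `d`:
the least number of `d`-th powers of real linear forms needed to write `f`. -/
def realRank (f : MvPolynomial (Fin 2) ℝ) (d : ℕ) : ℕ :=
  sInf {r | HasDecomp f d r}

/-- The set of real projective roots of a binary form. -/
def projRoots (f : MvPolynomial (Fin 2) ℝ) : Set (Projectivization ℝ (Fin 2 → ℝ)) :=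
  {p | eval p.rep f = 0}

/-- `f` is a product of `d` pairwise non-proportional real linear forms,
i.e. `f` has `d` distinct real roots. -/
def SplitsDistinct (f : MvPolynomial (Fin 2) ℝ) (d : ℕ) : Prop :=
  ∃ a b : Fin d → ℝ, (∀ j, (a j, b j) ≠ (0, 0)) ∧
    (∀ i j, i ≠ j → a i * b j ≠ a j * b i) ∧
    f = ∏ j, lin (a j) (b j)

/-- `f` has distinct roots, i.e. it is squarefree as a complex polynomial. -/
def SquarefreeC (f : MvPolynomial (Fin 2) ℝ) : Prop :=
  Squarefree (MvPolynomial.map (algebraMap ℝ ℂ) f)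

/-- The linear change of variables of `f` by the matrix `A`: `f(A(x,y))`. -/
def subst (A : Matrix (Fin 2) (Fin 2) ℝ) (f : MvPolynomial (Fin 2) ℝ) :
    MvPolynomial (Fin 2) ℝ :=
  aeval (fun i => C (A i 0) * X 0 + C (A i 1) * X 1) f

/-- The complex rank of a real binary form of degree `d`. -/
def complexRank (f : MvPolynomial (Fin 2) ℝ) (d : ℕ) : ℕ :=
  sInf {r | ∃ a b : Fin r → ℂ, (∀ j, (a j, b j) ≠ (0, 0)) ∧
    MvPolynomial.map (algebraMap ℝ ℂ) f = ∑ j, (C (a j) * X 0 + C (b j) * X 1) ^ d}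

/- Every form of degree `d` is a sum of `d` powers, and three facts decide where the forms of rank
at most `r` have interior. For `2 * r ≤ d` they satisfy a determinantal equation, the vanishing of
a minor of the catalecticant. For `d < 2 * r` the tangent lines of the rational normal curve at
`r` distinct points span the whole space, because no nonzero polynomial of degree `d` has `r`
double roots; so these forms lie in the closure of their interior. Finally, for `r < d` they are
not dense: a limit of sums of `r` powers is apolar to a product of `d - 1` real linear forms,
whereas the forms of degree `d - 1` apolar to `Im (x + i y) ^ d` all vanish at the point `(1, i)`.

If rank exactly `r + 1` had empty interior although `d < 2 * (r + 1)`, every sum of `r + 1` powers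
would be a limit of sums of `r` powers. Adding one power at a time, the same would hold for all
forms, which contradicts the last fact when `r < d`. -/

/-! ### Binary forms and sums of powers -/

/-- The binary form `∑ᵢ (d choose i) aᵢ s^(d-i) t^i` with coefficient vector `a`, in two variables
`s`, `t` of an arbitrary polynomial ring. -/
def binaryForm {σ : Type*} (s t : σ) {d : ℕ} (a : Fin (d + 1) → ℝ) : MvPolynomial σ ℝ :=
  ∑ i : Fin (d + 1), C ((Nat.choose d (i : ℕ) : ℝ) * a i) * X s ^ (d - (i : ℕ)) * X t ^ (i : ℕ)

theorem binaryForm_injective {σ : Type*} {s t : σ} (hst : s ≠ t) {d : ℕ} :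
    Function.Injective (binaryForm s t : (Fin (d + 1) → ℝ) → MvPolynomial σ ℝ) := by
  classical
  have coeff_eq (a : Fin (d + 1) → ℝ) (i : Fin (d + 1)) :
      coeff (Finsupp.single s (d - (i : ℕ)) + Finsupp.single t (i : ℕ)) (binaryForm s t a) =
        (Nat.choose d (i : ℕ) : ℝ) * a i := by
    have exponent_inj (j : Fin (d + 1)) :
        Finsupp.single s (d - (j : ℕ)) + Finsupp.single t (j : ℕ) =
          Finsupp.single s (d - (i : ℕ)) + Finsupp.single t (i : ℕ) ↔ j = i := by
      refine ⟨fun h => Fin.ext ?_, fun h => h ▸ rfl⟩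
      simpa [Finsupp.single_apply, hst] using DFunLike.congr_fun h t
    simp only [binaryForm, X_pow_eq_monomial, monomial_mul, C_mul_monomial, mul_one,
      coeff_sum, coeff_monomial, exponent_inj, Finset.sum_ite_eq', Finset.mem_univ, if_true]
  intro a b hab
  ext i
  have hchoose : (Nat.choose d (i : ℕ) : ℝ) ≠ 0 :=
    Nat.cast_ne_zero.2 (Nat.choose_pos (Nat.lt_succ_iff.1 i.2)).ne'
  apply mul_left_cancel₀ hchoose
  rw [← coeff_eq a i, ← coeff_eq b i, hab]

theorem binaryForm_eq_zero_iff {σ : Type*} {s t : σ} (hst : s ≠ t) {d : ℕ} {a : Fin (d + 1) → ℝ} :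
    binaryForm s t a = 0 ↔ a = 0 := by
  rw [← (binaryForm_injective hst).eq_iff (b := 0)]
  simp [binaryForm]

theorem binaryForm_add {σ : Type*} (s t : σ) {d : ℕ} (a b : Fin (d + 1) → ℝ) :
    binaryForm s t (a + b) = binaryForm s t a + binaryForm s t b := by
  simp only [binaryForm, Pi.add_apply, mul_add, map_add, add_mul, Finset.sum_add_distrib]

/-- The point `(α^d, α^(d-1)β, …, β^d)` of the affine cone over the rational normal curve: the
coefficient vector of `lin α β ^ d`. -/
def veronese (d : ℕ) (α β : ℝ) : Fin (d + 1) → ℝ := fun i => α ^ (d - (i : ℕ)) * β ^ (i : ℕ)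

theorem veronese_mul (d : ℕ) (s α β : ℝ) :
    veronese d (s * α) (s * β) = s ^ d • veronese d α β := by
  ext i
  have hpow : s ^ d = s ^ (d - (i : ℕ)) * s ^ (i : ℕ) :=
    (pow_sub_mul_pow s (Nat.lt_succ_iff.1 i.2)).symm
  simp only [veronese, Pi.smul_apply, smul_eq_mul, hpow, mul_pow]
  ring

theorem binaryForm_sum_smul_veronese {ι : Type*} [Fintype ι] (d : ℕ) (c α β : ι → ℝ) :
    binaryForm 0 1 (∑ j, c j • veronese d (α j) (β j)) =
      ∑ j, C (c j) * lin (α j) (β j) ^ d := by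
  simp only [binaryForm, Finset.sum_apply, Finset.mul_sum, map_sum, Finset.sum_mul]
  rw [Finset.sum_comm]
  refine Finset.sum_congr rfl fun j _ => ?_
  rw [lin, add_comm (C (α j) * X 0), add_pow, Finset.sum_range, Finset.mul_sum]
  refine Finset.sum_congr rfl fun i _ => ?_
  simp only [veronese, Pi.smul_apply, smul_eq_mul, map_mul, map_pow, map_natCast]
  ring

theorem hasDecomp_binaryForm_iff {d r : ℕ} {a : Fin (d + 1) → ℝ} :
    HasDecomp (binaryForm 0 1 a) d r ↔ ∃ c α β : Fin r → ℝ, (∀ j, (α j, β j) ≠ (0, 0)) ∧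
      a = ∑ j, c j • veronese d (α j) (β j) := by
  simp only [HasDecomp, ← binaryForm_sum_smul_veronese,
    (binaryForm_injective (zero_ne_one' (Fin 2))).eq_iff]

namespace HasDecomp

variable {f g : MvPolynomial (Fin 2) ℝ} {d r s : ℕ}

protected theorem zero (d r : ℕ) : HasDecomp 0 d r :=
  ⟨0, 1, 0, by simp, by simp⟩

protected theorem add (hf : HasDecomp f d r) (hg : HasDecomp g d s) :
    HasDecomp (f + g) d (r + s) := by
  obtain ⟨c, α, β, hne, rfl⟩ := hf
  obtain ⟨c', α', β', hne', rfl⟩ := hg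
  refine ⟨Fin.append c c', Fin.append α α', Fin.append β β', fun j => ?_, ?_⟩
  · refine Fin.addCases (fun i => ?_) (fun i => ?_) j
    · simpa only [Fin.append_left] using hne i
    · simpa only [Fin.append_right] using hne' i
  · simp only [Fin.sum_univ_add, Fin.append_left, Fin.append_right]

theorem mono (hrs : r ≤ s) (hf : HasDecomp f d r) : HasDecomp f d s := by
  obtain ⟨k, rfl⟩ := Nat.exists_eq_add_of_le hrs
  simpa only [add_zero] using hf.add (.zero d k)

theorem realRank_le (hf : HasDecomp f d r) : realRank f d ≤ r := Nat.sInf_le hf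

theorem realRank_self (hf : HasDecomp f d r) : HasDecomp f d (realRank f d) :=
  Nat.sInf_mem (s := {r | HasDecomp f d r}) ⟨r, hf⟩

end HasDecomp

theorem ne_zero_and_realRank_eq_succ_iff {f : MvPolynomial (Fin 2) ℝ} {d r : ℕ} :
    f ≠ 0 ∧ realRank f d = r + 1 ↔ HasDecomp f d (r + 1) ∧ ¬ HasDecomp f d r := by
  constructor
  · rintro ⟨-, hrank⟩
    have hset : {k | HasDecomp f d k}.Nonempty :=
      Nat.nonempty_of_sInf_eq_succ hrank
    exact ⟨hrank ▸ hset.some_mem.realRank_self, fun h => by have := h.realRank_le; omega⟩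
  · rintro ⟨hsucc, hnot⟩
    refine ⟨fun hf => hnot (hf ▸ .zero d r), le_antisymm hsucc.realRank_le ?_⟩
    by_contra! hlt
    exact hnot (hsucc.realRank_self.mono (Nat.lt_succ_iff.1 hlt))

/-- The coefficient vectors of the binary forms of degree `d` that are combinations of `r` powers of
linear forms; since coefficients may vanish, these are the forms of real rank at most `r`. -/
def rankLE (d r : ℕ) : Set (Fin (d + 1) → ℝ) := {a | HasDecomp (binaryForm 0 1 a) d r}

theorem rankLE_mono {d r s : ℕ} (hrs : r ≤ s) : rankLE d r ⊆ rankLE d s :=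
  fun _ ha => HasDecomp.mono hrs ha

theorem add_mem_rankLE {d r s : ℕ} {a b : Fin (d + 1) → ℝ} (ha : a ∈ rankLE d r)
    (hb : b ∈ rankLE d s) : a + b ∈ rankLE d (r + s) := by
  rw [rankLE, Set.mem_ofPred_eq, binaryForm_add]
  exact HasDecomp.add ha hb

theorem exists_add_of_mem_rankLE {d r s : ℕ} {a : Fin (d + 1) → ℝ} (ha : a ∈ rankLE d (r + s)) :
    ∃ b ∈ rankLE d r, ∃ b' ∈ rankLE d s, a = b + b' := by
  obtain ⟨c, α, β, hne, rfl⟩ := hasDecomp_binaryForm_iff.1 ha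
  exact ⟨_, hasDecomp_binaryForm_iff.2 ⟨_, _, _, fun j => hne (Fin.castAdd s j), rfl⟩,
    _, hasDecomp_binaryForm_iff.2 ⟨_, _, _, fun j => hne (Fin.natAdd r j), rfl⟩,
    Fin.sum_univ_add _⟩

theorem setOf_realRank_eq_succ (d r : ℕ) :
    {a : Fin (d + 1) → ℝ | binaryForm (0 : Fin 2) 1 a ≠ 0 ∧ realRank (binaryForm 0 1 a) d = r + 1} =
      rankLE d (r + 1) \ rankLE d r :=
  Set.ext fun _ => ne_zero_and_realRank_eq_succ_iff

/-! ### Every form is a sum of `d` powers -/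

theorem linearIndependent_veronese {n : ℕ} {α β : Fin (n + 1) → ℝ}
    (hαβ : Pairwise fun i j => α i * β j ≠ α j * β i) :
    LinearIndependent ℝ fun j => veronese n (α j) (β j) := by
  have hdet : (Matrix.projVandermonde β α).det ≠ 0 := by
    simp only [Matrix.det_projVandermonde, Finset.prod_ne_zero_iff, Finset.mem_Ioi, sub_ne_zero]
    intro i _ j hij
    simpa only [mul_comm] using hαβ hij.ne
  have hrows : (fun j => veronese n (α j) (β j)) = (Matrix.projVandermonde β α).row := by
    ext j i
    simp only [veronese, Matrix.row_apply, Matrix.projVandermonde_apply, Fin.val_rev,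
      Nat.add_sub_add_right, mul_comm]
  rw [hrows, Matrix.linearIndependent_rows_iff_isUnit, Matrix.isUnit_iff_isUnit_det]
  exact hdet.isUnit

theorem linearIndependent_veronese_succ {ι : Type*} [Finite ι] {d : ℕ} {α β : ι → ℝ}
    (hne : ∀ j, (α j, β j) ≠ (0, 0)) (h : LinearIndependent ℝ fun j => veronese d (α j) (β j)) :
    LinearIndependent ℝ fun j => veronese (d + 1) (α j) (β j) := by
  cases nonempty_fintype ι
  rw [Fintype.linearIndependent_iff] at h ⊢
  intro c hc j
  have hcα : ∑ j, (c j * α j) • veronese d (α j) (β j) = 0 := by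
    ext i
    have hi := congrFun hc i.castSucc
    simp only [Finset.sum_apply, Pi.smul_apply, smul_eq_mul, Pi.zero_apply, veronese,
      Fin.val_castSucc, Nat.succ_sub (Nat.lt_succ_iff.1 i.2), pow_succ] at hi ⊢
    simpa only [mul_assoc, mul_left_comm, mul_comm] using hi
  have hcβ : ∑ j, (c j * β j) • veronese d (α j) (β j) = 0 := by
    ext i
    have hi := congrFun hc i.succ
    simp only [Finset.sum_apply, Pi.smul_apply, smul_eq_mul, Pi.zero_apply, veronese, Fin.val_succ,
      Nat.add_sub_add_right, pow_succ] at hi ⊢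
    simpa only [mul_assoc, mul_left_comm, mul_comm] using hi
  by_contra hcj
  exact hne j (Prod.ext ((mul_eq_zero_iff_left hcj).1 (h _ hcα j))
    ((mul_eq_zero_iff_left hcj).1 (h _ hcβ j)))

/-- The point of the cone over the rational normal curve at angle `x · π / d`. -/
def circlePoint (d : ℕ) (x : ℝ) : Fin (d + 1) → ℝ :=
  veronese d (Real.cos (x * Real.pi / d)) (Real.sin (x * Real.pi / d))

theorem continuous_circlePoint (d : ℕ) : Continuous (circlePoint d) := by
  unfold circlePoint veronese
  fun_prop

theorem circlePoint_add_degree {d : ℕ} (hd : d ≠ 0) (x : ℝ) :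
    circlePoint d (x + d) = (-1 : ℝ) ^ d • circlePoint d x := by
  have hangle : (x + d) * Real.pi / d = x * Real.pi / d + Real.pi := by field_simp
  rw [circlePoint, hangle, Real.cos_add_pi, Real.sin_add_pi, neg_eq_neg_one_mul (Real.cos _),
    neg_eq_neg_one_mul (Real.sin _), veronese_mul, circlePoint]

theorem cos_sin_ne_zero (θ : ℝ) : (Real.cos θ, Real.sin θ) ≠ (0, 0) := by
  rw [Ne, Prod.mk.injEq]
  rintro ⟨hcos, hsin⟩
  simpa [hcos, hsin] using Real.sin_sq_add_cos_sq θ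

theorem linearIndependent_circlePoint (n : ℕ) (x : ℝ) :
    LinearIndependent ℝ fun j : Fin (n + 1) => circlePoint (n + 1) (x + j) := by
  refine linearIndependent_veronese_succ (fun _ => cos_sin_ne_zero _)
    (linearIndependent_veronese fun i j hij heq => hij ?_)
  set δ : ℝ := ((j : ℝ) - i) / (n + 1) with hδ
  have hi : (i : ℝ) ≤ n := by exact_mod_cast Nat.lt_succ_iff.1 i.2
  have hj : (j : ℝ) ≤ n := by exact_mod_cast Nat.lt_succ_iff.1 j.2
  have hδ_lt : δ < 1 := by
    rw [hδ, div_lt_one (by positivity)]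
    linarith [i.1.cast_nonneg (α := ℝ)]
  have hδ_gt : -1 < δ := by
    rw [hδ, lt_div_iff₀ (by positivity)]
    linarith [j.1.cast_nonneg (α := ℝ)]
  have hangle : δ * Real.pi =
      (x + j) * Real.pi / (n + 1 : ℕ) - (x + i) * Real.pi / (n + 1 : ℕ) := by
    push_cast
    ring
  have hsin : Real.sin (δ * Real.pi) = 0 := by
    rw [hangle, Real.sin_sub]
    linarith
  rw [Real.sin_eq_zero_iff_of_lt_of_lt (by nlinarith [Real.pi_pos]) (by nlinarith [Real.pi_pos]),
    mul_eq_zero_iff_right Real.pi_ne_zero, hδ, div_eq_zero_iff, sub_eq_zero] at hsin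
  rcases hsin with h | h
  · exact Fin.ext (by exact_mod_cast h.symm)
  · exact absurd h (by positivity)

theorem map_circlePoint_add_one {n : ℕ} (g : (Fin (n + 2) → ℝ) [⋀^Fin (n + 1)]→ₗ[ℝ] ℝ) (x : ℝ) :
    g (fun j => circlePoint (n + 1) (x + 1 + j)) =
      - g (fun j => circlePoint (n + 1) (x + j)) := by
  let ε : Fin (n + 1) → ℝ := Fin.snoc (fun _ => 1) ((-1) ^ (n + 1))
  have hshift : (fun j : Fin (n + 1) => circlePoint (n + 1) (x + 1 + j)) =
      fun j => ε j • circlePoint (n + 1) (x + finRotate (n + 1) j) := by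
    funext j
    induction j using Fin.lastCases with
    | last =>
      have h := circlePoint_add_degree n.succ_ne_zero x
      simp only [ε, Fin.snoc_last, finRotate_last, Fin.val_zero, Nat.cast_zero, add_zero, ← h,
        Fin.val_last]
      push_cast
      ring_nf
    | cast j =>
      simp only [ε, Fin.snoc_castSucc, one_smul, Fin.val_castSucc, finRotate_apply,
        Fin.coeSucc_eq_succ, Fin.val_succ, Nat.cast_succ, add_right_comm, ← add_assoc]
  have hsign : (∏ j, ε j) * (-1 : ℝ) ^ n = -1 := by
    simp only [ε, Fin.prod_snoc, Finset.prod_const_one, one_mul, pow_succ]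
    rw [mul_right_comm, ← mul_pow]
    norm_num
  have hrotate := g.map_perm (fun j => circlePoint (n + 1) (x + j)) (finRotate (n + 1))
  rw [sign_finRotate, Nat.add_sub_cancel] at hrotate
  rw [hshift, g.map_smul_univ]
  refine (congrArg _ hrotate).trans ?_
  rw [Units.smul_def, zsmul_eq_mul, smul_eq_mul, ← mul_assoc]
  push_cast
  rw [hsign, neg_one_mul]

theorem mem_span_range_of_det_eq_zero {K : Type*} [Field K] {n : ℕ} {a : Fin (n + 1) → K}
    {v : Fin n → Fin (n + 1) → K} (hv : LinearIndependent K v)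
    (hdet : Matrix.det (Matrix.of (Matrix.vecCons a v)) = 0) :
    a ∈ Submodule.span K (Set.range v) := by
  by_contra hnot
  have hunit : IsUnit (Matrix.of (Matrix.vecCons a v)) :=
    Matrix.linearIndependent_rows_iff_isUnit.1 (linearIndependent_finCons.2 ⟨hv, hnot⟩)
  exact ((Matrix.isUnit_iff_isUnit_det _).1 hunit).ne_zero hdet

/- The determinant of `a` and `n + 1` equally spaced points of the circle changes sign when the
points are rotated into one another; where it vanishes, `a` lies in their span. -/
theorem exists_mem_span_range_circlePoint {n : ℕ} (a : Fin (n + 2) → ℝ) :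
    ∃ x, a ∈ Submodule.span ℝ (Set.range fun j : Fin (n + 1) => circlePoint (n + 1) (x + j)) := by
  let g : (Fin (n + 2) → ℝ) [⋀^Fin (n + 1)]→ₗ[ℝ] ℝ := Matrix.detRowAlternating.curryLeft a
  let D : ℝ → ℝ := fun x => g fun j => circlePoint (n + 1) (x + j)
  have hD : Continuous D :=
    Continuous.matrix_det <| continuous_const.matrixVecCons <| continuous_pi fun j =>
      (continuous_circlePoint (n + 1)).comp (continuous_add_const (j : ℝ))
  have hflip : D 1 = -D 0 := by
    simpa only [D, zero_add (1 : ℝ)] using map_circlePoint_add_one g 0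
  have hzero : (0 : ℝ) ∈ Set.uIcc (D 0) (D 1) := by
    rw [hflip, Set.mem_uIcc]
    rcases le_total (D 0) 0 with h | h
    · exact Or.inl ⟨h, neg_nonneg.2 h⟩
    · exact Or.inr ⟨neg_nonpos.2 h, h⟩
  obtain ⟨x, -, hx⟩ := intermediate_value_uIcc hD.continuousOn hzero
  exact ⟨x, mem_span_range_of_det_eq_zero (linearIndependent_circlePoint n x) hx⟩

theorem hasDecomp_degree {d : ℕ} (hd : d ≠ 0) (a : Fin (d + 1) → ℝ) :
    HasDecomp (binaryForm 0 1 a) d d := by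
  obtain ⟨n, rfl⟩ := Nat.exists_eq_succ_of_ne_zero hd
  obtain ⟨x, hspan⟩ := exists_mem_span_range_circlePoint a
  obtain ⟨c, hc⟩ := (Submodule.mem_span_range_iff_exists_fun ℝ).1 hspan
  exact hasDecomp_binaryForm_iff.2 ⟨c, _, _, fun _ => cos_sin_ne_zero _, hc.symm⟩

/-! ### Catalecticants -/

theorem dense_setOf_ne_zero_of_analyticOnNhd {E : Type*} [NormedAddCommGroup E] [NormedSpace ℝ E]
    {f : E → ℝ} (hf : AnalyticOnNhd ℝ f Set.univ) {x₀ : E} (hx₀ : f x₀ ≠ 0) :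
    Dense {x | f x ≠ 0} := by
  rw [← Set.compl_ofPred, ← interior_eq_empty_iff_dense_compl, Set.eq_empty_iff_forall_notMem]
  intro x hx
  have hzero : f =ᶠ[nhds x] 0 := mem_interior_iff_mem_nhds.1 hx
  exact hx₀ (congrFun (hf.eq_of_eventuallyEq analyticOnNhd_const hzero) x₀)

/-- The leading `(r + 1) × (r + 1)` block `(a (i + j))` of the catalecticant of the binary form with
coefficient vector `a`. -/
def catalecticant {d r : ℕ} (h : 2 * r ≤ d) (a : Fin (d + 1) → ℝ) :
    Matrix (Fin (r + 1)) (Fin (r + 1)) ℝ :=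
  Matrix.of fun i j => a ⟨i + j, by omega⟩

theorem catalecticant_sum_smul_veronese {ι : Type*} [Fintype ι] {d r : ℕ}
    (h : 2 * r ≤ d) (c α β : ι → ℝ) :
    catalecticant h (∑ j, c j • veronese d (α j) (β j)) =
      (Matrix.of fun (i : Fin (r + 1)) j => c j * α j ^ (d - 2 * r) * veronese r (α j) (β j) i) *
        Matrix.of fun j => veronese r (α j) (β j) := by
  ext i k
  simp only [catalecticant, Matrix.of_apply, Finset.sum_apply, Pi.smul_apply, smul_eq_mul,
    Matrix.mul_apply]
  refine Finset.sum_congr rfl fun j _ => ?_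
  have hexp : d - ((i : ℕ) + k) = d - 2 * r + (r - i) + (r - k) := by omega
  simp only [veronese, hexp, pow_add]
  ring

theorem det_catalecticant_eq_zero {d r : ℕ} (h : 2 * r ≤ d) {a : Fin (d + 1) → ℝ}
    (ha : a ∈ rankLE d r) : (catalecticant h a).det = 0 := by
  obtain ⟨c, α, β, -, rfl⟩ := hasDecomp_binaryForm_iff.1 ha
  by_contra hdet
  have hrank := Matrix.rank_of_isUnit _ ((Matrix.isUnit_iff_isUnit_det _).2 (Ne.isUnit hdet))
  rw [catalecticant_sum_smul_veronese, Fintype.card_fin] at hrank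
  have hle := (Matrix.rank_mul_le_left (Matrix.of fun (i : Fin (r + 1)) j =>
    c j * α j ^ (d - 2 * r) * veronese r (α j) (β j) i)
    (Matrix.of fun j => veronese r (α j) (β j))).trans (Matrix.rank_le_width _)
  omega

theorem analyticOnNhd_det_catalecticant {d r : ℕ} (h : 2 * r ≤ d) :
    AnalyticOnNhd ℝ (fun a => (catalecticant h a).det) Set.univ := by
  intro a _
  simp only [Matrix.det_apply', catalecticant, Matrix.of_apply]
  exact Finset.analyticAt_fun_sum _ fun σ _ => analyticAt_const.mul <|
    Finset.analyticAt_fun_prod _ fun i _ => (ContinuousLinearMap.proj (R := ℝ) _).analyticAt a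

theorem det_catalecticant_single_ne_zero {d r : ℕ} (h : 2 * r ≤ d) :
    (catalecticant h (Pi.single ⟨r, by omega⟩ 1)).det ≠ 0 := by
  have hperm : catalecticant h (Pi.single ⟨r, by omega⟩ 1) =
      (Fin.revPerm (n := r + 1)).permMatrix ℝ := by
    ext i j
    have hij : (i : ℕ) + j = r ↔ Fin.rev i = j := by
      rw [Fin.ext_iff, Fin.val_rev]
      omega
    simp [catalecticant, Pi.single_apply, Equiv.Perm.permMatrix, PEquiv.toMatrix_apply, hij]
  rw [hperm, Matrix.det_permutation]
  simp

theorem interior_rankLE_eq_empty {d r : ℕ} (h : 2 * r ≤ d) : interior (rankLE d r) = ∅ := by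
  rw [interior_eq_empty_iff_dense_compl]
  have hdense := dense_setOf_ne_zero_of_analyticOnNhd (analyticOnNhd_det_catalecticant h)
    (det_catalecticant_single_ne_zero h)
  refine hdense.mono fun a hdet ha => ?_
  exact hdet (det_catalecticant_eq_zero h ha)

/-! ### Tangent lines to the rational normal curve -/

theorem eq_zero_of_double_roots {K ι : Type*} [Field K] [Fintype ι] {t : ι → K}
    (ht : Function.Injective t) {q : Polynomial K} (hq : q.natDegree < 2 * Fintype.card ι)
    (hroot : ∀ j, q.eval (t j) = 0) (hderiv : ∀ j, q.derivative.eval (t j) = 0) : q = 0 := by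
  by_contra hne
  have hdvd : ∏ j, (Polynomial.X - Polynomial.C (t j)) ^ 2 ∣ q := by
    refine Fintype.prod_dvd_of_coprime
      ((Polynomial.pairwise_coprime_X_sub_C ht).mono fun i j h => h.pow) fun j => ?_
    rw [← Polynomial.le_rootMultiplicity_iff hne]
    exact (Polynomial.one_lt_rootMultiplicity_iff_isRoot hne).2 ⟨hroot j, hderiv j⟩
  have hdeg := Polynomial.natDegree_le_of_dvd hdvd hne
  rw [Polynomial.natDegree_prod_of_monic _ _ fun j _ => (Polynomial.monic_X_sub_C _).pow 2] at hdeg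
  simp only [Polynomial.natDegree_pow, Polynomial.natDegree_X_sub_C, Finset.sum_const,
    Finset.card_univ, smul_eq_mul] at hdeg
  omega

/-- The polynomial of a linear functional on coefficient vectors: its values are those of the
functional along the affine rational normal curve. -/
def dualPolynomial {d : ℕ} (φ : Module.Dual ℝ (Fin (d + 1) → ℝ)) : Polynomial ℝ :=
  ∑ i : Fin (d + 1), Polynomial.monomial (i : ℕ) (φ (Pi.single i 1))

theorem natDegree_dualPolynomial_le {d : ℕ} (φ : Module.Dual ℝ (Fin (d + 1) → ℝ)) :
    (dualPolynomial φ).natDegree ≤ d :=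
  Polynomial.natDegree_sum_le_of_forall_le _ _ fun i _ =>
    (Polynomial.natDegree_monomial_le _).trans (Nat.lt_succ_iff.1 i.2)

theorem eval_dualPolynomial {d : ℕ} (φ : Module.Dual ℝ (Fin (d + 1) → ℝ)) (t : ℝ) :
    (dualPolynomial φ).eval t = φ (veronese d 1 t) := by
  rw [LinearMap.pi_apply_eq_sum_univ φ, dualPolynomial, Polynomial.eval_finsetSum]
  refine Finset.sum_congr rfl fun i _ => ?_
  rw [Polynomial.eval_monomial, veronese, one_pow, one_mul, smul_eq_mul, mul_comm]
  congr! 3 with j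
  simp [Pi.single_apply, eq_comm]

theorem dualPolynomial_eq_zero_iff {d : ℕ} {φ : Module.Dual ℝ (Fin (d + 1) → ℝ)} :
    dualPolynomial φ = 0 ↔ φ = 0 := by
  refine ⟨fun h => LinearMap.pi_ext' fun i => LinearMap.ext_ring ?_, fun h => by
    simp [h, dualPolynomial]⟩
  have hi := congrArg (Polynomial.coeff · i) h
  simpa [dualPolynomial, Polynomial.coeff_monomial, ← Fin.ext_iff] using hi

theorem contDiff_veronese (d : ℕ) {n : WithTop ℕ∞} : ContDiff ℝ n (veronese d 1) := by
  unfold veronese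
  fun_prop

theorem eval_derivative_dualPolynomial {d : ℕ} (φ : Module.Dual ℝ (Fin (d + 1) → ℝ)) (t : ℝ) :
    (dualPolynomial φ).derivative.eval t = φ (deriv (veronese d 1) t) := by
  have hcurve := ((contDiff_veronese d).differentiable one_ne_zero t).hasDerivAt
  have hφ := φ.toContinuousLinearMap.hasFDerivAt.comp_hasDerivAt t hcurve
  have hpoly := (dualPolynomial φ).hasDerivAt t
  rw [funext (eval_dualPolynomial φ)] at hpoly
  exact hpoly.unique hφ

theorem dual_eq_zero_of_veronese_of_deriv {d r : ℕ} (hdr : d < 2 * r) {t : Fin r → ℝ}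
    (ht : Function.Injective t) {φ : Module.Dual ℝ (Fin (d + 1) → ℝ)}
    (hpoint : ∀ j, φ (veronese d 1 (t j)) = 0)
    (htangent : ∀ j, φ (deriv (veronese d 1) (t j)) = 0) : φ = 0 := by
  refine dualPolynomial_eq_zero_iff.1 <|
    eq_zero_of_double_roots ht ?_ (fun j => ?_) fun j => ?_
  · rw [Fintype.card_fin]
    exact (natDegree_dualPolynomial_le φ).trans_lt hdr
  · rw [eval_dualPolynomial, hpoint]
  · rw [eval_derivative_dualPolynomial, htangent]

/-- The combination, with coefficients `c`, of the points of the affine rational normal curve with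
parameters `t`, as a function of the pair `(c, t)`. -/
def affineSum (d : ℕ) {r : ℕ} (p : (Fin r → ℝ) × (Fin r → ℝ)) : Fin (d + 1) → ℝ :=
  ∑ j, p.1 j • veronese d 1 (p.2 j)

/-- The derivative of `affineSum` at the pair `p`. -/
def affineSumDeriv (d : ℕ) {r : ℕ} (p : (Fin r → ℝ) × (Fin r → ℝ)) :
    (Fin r → ℝ) × (Fin r → ℝ) →L[ℝ] Fin (d + 1) → ℝ :=
  ∑ j, (p.1 j • ((ContinuousLinearMap.proj j).comp (.snd ℝ _ _)).smulRight
      (deriv (veronese d 1) (p.2 j)) +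
    ((ContinuousLinearMap.proj j).comp (.fst ℝ _ _)).smulRight (veronese d 1 (p.2 j)))

theorem hasStrictFDerivAt_affineSum (d : ℕ) {r : ℕ} (p : (Fin r → ℝ) × (Fin r → ℝ)) :
    HasStrictFDerivAt (affineSum d) (affineSumDeriv d p) p := by
  refine HasStrictFDerivAt.fun_sum fun j _ => ?_
  have hcoeff := (hasStrictFDerivAt_apply (𝕜 := ℝ) j p.1).comp p hasStrictFDerivAt_fst
  have hparam := (hasStrictFDerivAt_apply (𝕜 := ℝ) j p.2).comp p hasStrictFDerivAt_snd
  have hcurve := (contDiff_veronese d).contDiffAt.hasStrictDerivAt (x := p.2 j) one_ne_zero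
  exact hcoeff.fun_smul (hcurve.hasStrictFDerivAt.comp p hparam)

theorem range_affineSumDeriv_eq_top {d r : ℕ} (hdr : d < 2 * r)
    {p : (Fin r → ℝ) × (Fin r → ℝ)} (hc : ∀ j, p.1 j ≠ 0) (ht : Function.Injective p.2) :
    (affineSumDeriv d p).range = ⊤ := by
  by_contra hne
  obtain ⟨φ, hφ, hker⟩ := Submodule.exists_le_ker_of_lt_top _ (lt_top_iff_ne_top.2 hne)
  have hzero (v) : φ (affineSumDeriv d p v) = 0 := hker ⟨v, rfl⟩
  refine hφ (dual_eq_zero_of_veronese_of_deriv hdr ht (fun j => ?_) fun j => ?_)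
  · simpa [affineSumDeriv, Pi.single_apply] using hzero (Pi.single j 1, 0)
  · simpa [affineSumDeriv, Pi.single_apply, hc j] using hzero (0, Pi.single j 1)

theorem affineSum_mem_interior_rankLE {d r : ℕ} (hdr : d < 2 * r)
    {p : (Fin r → ℝ) × (Fin r → ℝ)} (hc : ∀ j, p.1 j ≠ 0) (ht : Function.Injective p.2) :
    affineSum d p ∈ interior (rankLE d r) := by
  rw [mem_interior_iff_mem_nhds, ← (hasStrictFDerivAt_affineSum d p).map_nhds_eq_of_surj
    (range_affineSumDeriv_eq_top hdr hc ht)]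
  exact Filter.mem_map.2 <| Filter.univ_mem' fun p =>
    hasDecomp_binaryForm_iff.2 ⟨p.1, 1, p.2, by simp, rfl⟩

theorem sum_smul_veronese_mem_interior_rankLE {d r : ℕ} (hdr : d < 2 * r) {c α β : Fin r → ℝ}
    (hc : ∀ j, c j ≠ 0) (hα : ∀ j, α j ≠ 0) (hαβ : Pairwise fun i j => α i * β j ≠ α j * β i) :
    ∑ j, c j • veronese d (α j) (β j) ∈ interior (rankLE d r) := by
  have hpoint (j) : veronese d (α j) (β j) = α j ^ d • veronese d 1 (β j / α j) := by
    rw [← veronese_mul, mul_one, mul_div_cancel₀ _ (hα j)]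
  have haffine : ∑ j, c j • veronese d (α j) (β j) =
      affineSum d (fun j => c j * α j ^ d, fun j => β j / α j) :=
    Finset.sum_congr rfl fun j _ => by rw [hpoint, smul_smul]
  rw [haffine]
  refine affineSum_mem_interior_rankLE hdr (fun j => mul_ne_zero (hc j) (pow_ne_zero _ (hα j)))
    fun i j hij => ?_
  rw [div_eq_div_iff (hα i) (hα j)] at hij
  by_contra hne
  exact hαβ hne (by linarith)

theorem dense_setOf_generic (r : ℕ) :
    Dense {x : (Fin r → ℝ) × (Fin r → ℝ) × (Fin r → ℝ) | (∀ j, x.1 j ≠ 0) ∧ (∀ j, x.2.1 j ≠ 0) ∧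
      Pairwise fun i j => x.2.1 i * x.2.2 j ≠ x.2.1 j * x.2.2 i} := by
  let G : (Fin r → ℝ) × (Fin r → ℝ) × (Fin r → ℝ) → ℝ := fun x =>
    (∏ j, x.1 j * x.2.1 j) *
      ∏ k ∈ (Finset.univ : Finset (Fin r)).offDiag,
        (x.2.1 k.1 * x.2.2 k.2 - x.2.1 k.2 * x.2.2 k.1)
  have hG : AnalyticOnNhd ℝ G Set.univ := by
    intro x _
    have hc := analyticAt_pi_iff.1 (analyticAt_fst (𝕜 := ℝ) (p := x))
    have hα := analyticAt_pi_iff.1 ((analyticAt_fst (𝕜 := ℝ)).comp (analyticAt_snd (p := x)))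
    have hβ := analyticAt_pi_iff.1 ((analyticAt_snd (𝕜 := ℝ)).comp (analyticAt_snd (p := x)))
    exact (Finset.analyticAt_fun_prod _ fun j _ => (hc j).mul (hα j)).mul <|
      Finset.analyticAt_fun_prod _ fun k _ =>
        ((hα k.1).mul (hβ k.2)).sub ((hα k.2).mul (hβ k.1))
  have hG_ne : G (1, 1, fun j => j) ≠ 0 := by
    simp +contextual [G, Finset.prod_eq_zero_iff, sub_eq_zero, Fin.val_inj]
  refine (dense_setOf_ne_zero_of_analyticOnNhd hG hG_ne).mono fun x hx => ?_
  obtain ⟨hcα, hαβ⟩ := mul_ne_zero_iff.1 hx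
  simp only [Finset.prod_ne_zero_iff, Finset.mem_univ, mul_ne_zero_iff, Finset.mem_offDiag,
    sub_ne_zero] at hcα hαβ
  exact ⟨fun j => (hcα j trivial).1, fun j => (hcα j trivial).2,
    fun i j hij => hαβ (i, j) ⟨trivial, trivial, hij⟩⟩

theorem rankLE_subset_closure_interior {d r : ℕ} (hdr : d < 2 * r) :
    rankLE d r ⊆ closure (interior (rankLE d r)) := by
  intro a ha
  obtain ⟨c, α, β, -, rfl⟩ := hasDecomp_binaryForm_iff.1 ha
  let Φ : (Fin r → ℝ) × (Fin r → ℝ) × (Fin r → ℝ) → Fin (d + 1) → ℝ := fun x =>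
    ∑ j, x.1 j • veronese d (x.2.1 j) (x.2.2 j)
  have hΦ : Continuous Φ := by
    unfold Φ veronese
    fun_prop
  exact map_mem_closure (f := Φ) hΦ (dense_setOf_generic r (c, α, β)) fun _ ⟨hc, hα, hαβ⟩ =>
    sum_smul_veronese_mem_interior_rankLE hdr hc hα hαβ

theorem rankLE_add_subset_closure {d r : ℕ} (h : rankLE d (r + 1) ⊆ closure (rankLE d r)) (m : ℕ) :
    rankLE d (r + m) ⊆ closure (rankLE d r) := by
  induction m with
  | zero => exact subset_closure
  | succ m ih =>
    intro a ha
    obtain ⟨b, hb, b', hb', rfl⟩ := exists_add_of_mem_rankLE (r := r + m) (s := 1) ha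
    refine closure_minimal h isClosed_closure ?_
    exact map_mem_closure (f := (· + b')) (continuous_add_const b') (ih hb) fun _ hx =>
      add_mem_rankLE hx hb'

theorem interior_rankLE_diff_nonempty {d r : ℕ} (hd : d ≠ 0) (hdr : d < 2 * (r + 1))
    (hdense : ¬ Dense (rankLE d r)) :
    (interior (rankLE d (r + 1) \ rankLE d r)).Nonempty := by
  by_contra hempty
  rw [Set.not_nonempty_iff_eq_empty] at hempty
  have hinterior : interior (rankLE d (r + 1)) ⊆ closure (rankLE d r) := by
    intro a ha
    by_contra hnot
    have hmem : a ∈ interior (rankLE d (r + 1) \ rankLE d r) := by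
      rw [Set.sdiff_eq, interior_inter, interior_compl]
      exact ⟨ha, hnot⟩
    exact hempty.le hmem
  have hsucc : rankLE d (r + 1) ⊆ closure (rankLE d r) :=
    (rankLE_subset_closure_interior hdr).trans (closure_minimal hinterior isClosed_closure)
  refine hdense fun a => rankLE_add_subset_closure hsucc d ?_
  exact rankLE_mono (Nat.le_add_left d r) (hasDecomp_degree hd a)

/-! ### Apolarity -/

theorem aeval_eq_sum_of_isHomogeneous {R A : Type*} [CommSemiring R] [CommSemiring A] [Algebra R A]
    {d : ℕ} {g : MvPolynomial (Fin 2) R} (hg : g.IsHomogeneous d) (x : Fin 2 → A) :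
    aeval x g = ∑ i : Fin (d + 1),
      coeff (Finsupp.single 0 (d - (i : ℕ)) + Finsupp.single 1 (i : ℕ)) g •
        (x 0 ^ (d - (i : ℕ)) * x 1 ^ (i : ℕ)) := by
  classical
  let e : Fin (d + 1) → Fin 2 →₀ ℕ := fun i =>
    Finsupp.single 0 (d - (i : ℕ)) + Finsupp.single 1 (i : ℕ)
  have he : Function.Injective e := fun i j hij =>
    Fin.ext (by simpa [e] using DFunLike.congr_fun hij 1)
  have hsupport : g.support ⊆ Finset.univ.image e := by
    intro m hm
    have hdeg : m 0 + m 1 = d := by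
      simpa [Finsupp.weight_apply, Finsupp.sum_fintype] using hg (mem_support_iff.1 hm)
    refine Finset.mem_image.2 ⟨⟨m 1, by omega⟩, Finset.mem_univ _, Finsupp.ext fun k => ?_⟩
    fin_cases k <;> simp [e, ← hdeg]
  rw [aeval_def, eval₂_eq', Finset.sum_subset hsupport fun m _ hm => by
    rw [notMem_support_iff.1 hm, map_zero, zero_mul], Finset.sum_image he.injOn]
  simp [e, Algebra.smul_def]

/-- The apolarity pairing of a form of degree `d` with a coefficient vector, normalized so that
pairing with `veronese d α β` is evaluation at `(α, β)`. -/
def apolarPairing {d : ℕ} (g : MvPolynomial (Fin 2) ℝ) (a : Fin (d + 1) → ℝ) : ℝ :=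
  ∑ i : Fin (d + 1),
    coeff (Finsupp.single 0 (d - (i : ℕ)) + Finsupp.single 1 (i : ℕ)) g * a i

theorem apolarPairing_sum_smul_veronese {ι : Type*} [Fintype ι] {d : ℕ}
    {g : MvPolynomial (Fin 2) ℝ} (hg : g.IsHomogeneous d) (c α β : ι → ℝ) :
    apolarPairing g (∑ j, c j • veronese d (α j) (β j)) = ∑ j, c j * eval ![α j, β j] g := by
  simp only [apolarPairing, Finset.sum_apply, Pi.smul_apply, smul_eq_mul, Finset.mul_sum]
  rw [Finset.sum_comm]
  refine Finset.sum_congr rfl fun j _ => ?_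
  rw [← coe_aeval_eq_eval, RingHom.coe_coe, aeval_eq_sum_of_isHomogeneous hg, Finset.mul_sum]
  refine Finset.sum_congr rfl fun i _ => ?_
  simp only [veronese, Matrix.cons_val_zero, Matrix.cons_val_one, smul_eq_mul]
  ring

/-- The coefficient vector of the imaginary part of `(x + i y) ^ d`. -/
def imPow (d : ℕ) : Fin (d + 1) → ℝ := fun i => (Complex.I ^ (i : ℕ)).im

theorem apolarPairing_imPow {d : ℕ} {g : MvPolynomial (Fin 2) ℝ} (hg : g.IsHomogeneous d) :
    apolarPairing g (imPow d) = (aeval ![1, Complex.I] g).im := by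
  simp [apolarPairing, imPow, aeval_eq_sum_of_isHomogeneous hg]

/-- The product of the linear forms vanishing at the points `z j` of the unit circle. -/
def circleForm {ι : Type*} [Fintype ι] (z : ι → Circle) : MvPolynomial (Fin 2) ℝ :=
  ∏ j, lin (z j : ℂ).im (-(z j : ℂ).re)

theorem isHomogeneous_lin (a b : ℝ) : (lin a b).IsHomogeneous 1 :=
  (isHomogeneous_C_mul_X a 0).add (isHomogeneous_C_mul_X b 1)

theorem isHomogeneous_X_mul_circleForm {n : ℕ} (k : Fin 2) (z : Fin n → Circle) :
    (X k * circleForm z).IsHomogeneous (n + 1) := by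
  have h := (isHomogeneous_X ℝ k).mul <|
    IsHomogeneous.prod Finset.univ _ _ fun j _ => isHomogeneous_lin (z j : ℂ).im (-(z j : ℂ).re)
  simpa [circleForm, add_comm 1 n] using h

theorem eval_circleForm_eq_zero {ι : Type*} [Fintype ι] (z : ι → Circle) (j : ι) :
    eval ![(z j : ℂ).re, (z j : ℂ).im] (circleForm z) = 0 := by
  rw [circleForm, map_prod]
  refine Finset.prod_eq_zero (Finset.mem_univ j) ?_
  simp [lin]
  ring

theorem aeval_I_circleForm_ne_zero {ι : Type*} [Fintype ι] (z : ι → Circle) :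
    aeval ![1, Complex.I] (circleForm z) ≠ 0 := by
  rw [circleForm, map_prod, Finset.prod_ne_zero_iff]
  intro j _
  have hfactor : aeval ![1, Complex.I] (lin (z j : ℂ).im (-(z j : ℂ).re)) = -Complex.I * z j := by
    apply Complex.ext <;> simp [lin]
  rw [hfactor]
  exact mul_ne_zero (neg_ne_zero.2 Complex.I_ne_zero) (z j).coe_ne_zero

theorem continuous_coeff_circleForm {ι : Type*} [Fintype ι] (m : Fin 2 →₀ ℕ) :
    Continuous fun z : ι → Circle => coeff m (circleForm z) := by
  classical
  unfold circleForm
  induction (Finset.univ : Finset ι) using Finset.induction_on generalizing m with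
  | empty => simpa only [Finset.prod_empty] using continuous_const
  | insert j s hj ih =>
    simp only [Finset.prod_insert hj, coeff_mul]
    refine continuous_finsetSum _ fun k _ => Continuous.mul ?_ (ih k.2)
    simp only [lin, coeff_add, coeff_C_mul]
    fun_prop

theorem exists_circle_of_mem_rankLE {d r : ℕ} {a : Fin (d + 1) → ℝ} (ha : a ∈ rankLE d r) :
    ∃ (c : Fin r → ℝ) (z : Fin r → Circle),
      a = ∑ j, c j • veronese d (z j : ℂ).re (z j : ℂ).im := by
  obtain ⟨c, α, β, -, rfl⟩ := hasDecomp_binaryForm_iff.1 ha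
  let w : Fin r → ℂ := fun j => ⟨α j, β j⟩
  have hα (j) : ‖w j‖ * (Circle.exp (w j).arg : ℂ).re = α j := by
    rw [Circle.coe_exp, Complex.exp_ofReal_mul_I_re, Complex.norm_mul_cos_arg]
  have hβ (j) : ‖w j‖ * (Circle.exp (w j).arg : ℂ).im = β j := by
    rw [Circle.coe_exp, Complex.exp_ofReal_mul_I_im, Complex.norm_mul_sin_arg]
  refine ⟨fun j => c j * ‖w j‖ ^ d, fun j => Circle.exp (w j).arg, ?_⟩
  simp only [mul_smul, ← veronese_mul, hα, hβ]

theorem continuous_apolarPairing_X_mul_circleForm {d n : ℕ} (k : Fin 2) :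
    Continuous fun p : (Fin n → Circle) × (Fin (d + 1) → ℝ) =>
      apolarPairing (X k * circleForm p.1) p.2 := by
  refine continuous_finsetSum _ fun i _ => Continuous.mul ?_ (by fun_prop)
  simp only [coeff_X_mul']
  split_ifs
  · exact (continuous_coeff_circleForm _).comp continuous_fst
  · exact continuous_const

theorem apolarPairing_X_mul_circleForm_eq_zero {n : ℕ} (k : Fin 2) (c : Fin n → ℝ)
    (z : Fin n → Circle) :
    apolarPairing (X k * circleForm z)
      (∑ j, c j • veronese (n + 1) (z j : ℂ).re (z j : ℂ).im) = 0 := by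
  rw [apolarPairing_sum_smul_veronese (isHomogeneous_X_mul_circleForm k z)]
  exact Finset.sum_eq_zero fun j _ => by rw [map_mul, eval_circleForm_eq_zero, mul_zero, mul_zero]

theorem exists_apolarPairing_imPow_ne_zero {n : ℕ} (z : Fin n → Circle) :
    ∃ k, apolarPairing (X k * circleForm z) (imPow (n + 1)) ≠ 0 := by
  by_contra! h
  simp only [apolarPairing_imPow (isHomogeneous_X_mul_circleForm _ z)] at h
  refine aeval_I_circleForm_ne_zero z (Complex.ext ?_ ?_)
  · simpa using h 1
  · simpa using h 0

theorem not_dense_rankLE (n : ℕ) : ¬ Dense (rankLE (n + 1) n) := by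
  let K : Set ((Fin n → Circle) × (Fin (n + 2) → ℝ)) :=
    {p | ∀ k, apolarPairing (X k * circleForm p.1) p.2 = 0}
  have hK : IsClosed K := by
    simp only [K, Set.ofPred_forall]
    exact isClosed_iInter fun k =>
      isClosed_eq (continuous_apolarPairing_X_mul_circleForm k) continuous_const
  have hsubset : rankLE (n + 1) n ⊆ Prod.snd '' K := by
    intro a ha
    obtain ⟨c, z, rfl⟩ := exists_circle_of_mem_rankLE ha
    exact ⟨(z, _), fun k => apolarPairing_X_mul_circleForm_eq_zero k c z, rfl⟩
  intro hdense
  obtain ⟨⟨z, _⟩, hz, rfl⟩ : imPow (n + 1) ∈ Prod.snd '' K :=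
    closure_minimal hsubset (isClosedMap_snd_of_compactSpace K hK) (hdense _)
  obtain ⟨k, hk⟩ := exists_apolarPairing_imPow_ne_zero z
  exact hk (hz k)

theorem stmt13_general {d : ℕ} (hd : d ≠ 0) (r : ℕ) :
    (interior {a : Fin (d + 1) → ℝ |
      binaryForm (0 : Fin 2) 1 a ≠ 0 ∧ realRank (binaryForm 0 1 a) d = r}).Nonempty ↔
        d < 2 * r ∧ r ≤ d := by
  constructor
  · rintro ⟨a, ha⟩
    have hrank := (interior_subset ha).2
    refine ⟨?_, hrank ▸ (hasDecomp_degree hd a).realRank_le⟩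
    by_contra! hle
    refine (interior_rankLE_eq_empty hle).le (interior_mono (fun b hb => ?_) ha)
    exact hb.2 ▸ (hasDecomp_degree hd b).realRank_self
  · rintro ⟨hlt, hle⟩
    obtain ⟨k, rfl⟩ := Nat.exists_eq_succ_of_ne_zero (by omega : r ≠ 0)
    obtain ⟨n, rfl⟩ := Nat.exists_eq_succ_of_ne_zero hd
    rw [setOf_realRank_eq_succ]
    exact interior_rankLE_diff_nonempty hd hlt fun hdense =>
      not_dense_rankLE n (hdense.mono (rankLE_mono (Nat.succ_le_succ_iff.1 hle)))

/-- identifying real binary quartics with coefficient vectors in `ℝ⁵`,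
the set of quartics of real rank exactly `r` has nonempty interior iff `r = 3` or `r = 4`. -/
theorem stmt13 (r : ℕ) :
    (interior {a : Fin 5 → ℝ |
        (∑ i : Fin 5, C ((Nat.choose 4 (i : ℕ) : ℝ) * a i) *
          X 0 ^ (4 - (i : ℕ)) * X 1 ^ (i : ℕ)) ≠ 0 ∧
        realRank (∑ i : Fin 5, C ((Nat.choose 4 (i : ℕ) : ℝ) * a i) *
          X 0 ^ (4 - (i : ℕ)) * X 1 ^ (i : ℕ)) 4 = r}).Nonempty ↔
      r = 3 ∨ r = 4 := by
  -- The form in the nonvanishing condition elaborates with variables indexed by `ℕ`.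
  have hset := stmt13_general four_ne_zero r
  simp only [Ne, binaryForm_eq_zero_iff (zero_ne_one' (Fin 2)),
    ← binaryForm_eq_zero_iff (zero_ne_one' ℕ)] at hset
  exact hset.trans (by omega)
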